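/- If t > 0 and s' = 0, then the kernel of the single-particle Hamiltonian h equals the span of the combined family {a_x : x ∈ E} ∪ {d_j : j ∈ J}; in particular the zero-energy flat band has dimension exactly card E + card J. -/

import Mathlib

/-!
Since `⟪v, h v⟫ = t ∑ⱼ |⟪b_j, v⟫|²` when `s' = 0`, and `t > 0`, the kernel of `h` is the orthogonal
complement of the `b_j` (`mem_ker_ham_iff`), i.e. it is cut out by the equations
`v_{u_j} + v_{v_j} + ν ∑_{x ∈ C j} v_x = 0`. Solving these for `v_{u_j} + v_{v_j}` shows that every
kernel vector is `∑ₓ v_x a_x + ∑ⱼ ((v_{u_j} - v_{v_j}) / 2) d_j`. The family is linearly independent: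
in a combination with coefficients `α_x`, `β_j`, the coordinate at `x` is `α_x`, and the one
at `u_j` is `β_j - (ν/2) ∑_{x ∈ C j} α_x`. Hence the dimension of the kernel is the size of the family.
-/

open scoped InnerProductSpace

noncomputable section

/-- The lattice `Λ`: two internal sites `(j,0)=u_j`, `(j,1)=v_j` per cell `j ∈ J`,
together with the external sites `E`. -/
abbrev FBLat (J E : Type*) := (J × Fin 2) ⊕ E

variable {J E : Type*} [Fintype J] [Fintype E] [DecidableEq J] [DecidableEq E]

/-- The standard orthonormal basis vector `e_r` at site `r`. -/
def esite (r : FBLat J E) : EuclideanSpace ℂ (FBLat J E) := EuclideanSpace.single r 1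

/-- `a_x = e_x - (ν/2) Σ_{j : x ∈ C j} (e_{u_j} + e_{v_j})`. -/
def avec (C : J → Finset E) (ν : ℝ) (x : E) : EuclideanSpace ℂ (FBLat J E) :=
  esite (Sum.inr x) -
    ((ν : ℂ) / 2) • ∑ j ∈ Finset.univ.filter (fun j => x ∈ C j),
      (esite (Sum.inl (j, 0)) + esite (Sum.inl (j, 1)))

/-- `b_j = e_{u_j} + e_{v_j} + ν Σ_{x ∈ C j} e_x`. -/
def bvec (C : J → Finset E) (ν : ℝ) (j : J) : EuclideanSpace ℂ (FBLat J E) :=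
  esite (Sum.inl (j, 0)) + esite (Sum.inl (j, 1)) +
    (ν : ℂ) • ∑ x ∈ C j, esite (Sum.inr x)

/-- `d_j = e_{u_j} - e_{v_j}`. -/
def dvec (j : J) : EuclideanSpace ℂ (FBLat J E) :=
  esite (Sum.inl (j, 0)) - esite (Sum.inl (j, 1))

/-- The single-particle Hamiltonian
`h v = t Σ_{j ∈ J} ⟪b_j, v⟫ b_j + s' Σ_{j ∈ J} ⟪d_j, v⟫ d_j`
(the inner product being conjugate-linear in the first argument). -/
def ham (C : J → Finset E) (ν t s' : ℝ) :
    EuclideanSpace ℂ (FBLat J E) →ₗ[ℂ] EuclideanSpace ℂ (FBLat J E) :=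
  (t : ℂ) • ∑ j, (innerₛₗ ℂ (bvec C ν j)).smulRight (bvec C ν j) +
    (s' : ℂ) • ∑ j, (innerₛₗ ℂ (dvec (E := E) j)).smulRight (dvec (E := E) j)

theorem avec_inr (C : J → Finset E) (ν : ℝ) (x y : E) :
    avec C ν x (Sum.inr y) = if x = y then 1 else 0 := by
  simp [avec, esite, eq_comm]

theorem avec_inl (C : J → Finset E) (ν : ℝ) (x : E) (j : J) (i : Fin 2) :
    avec C ν x (Sum.inl (j, i)) = if x ∈ C j then -((ν : ℂ) / 2) else 0 := by
  fin_cases i <;>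
    simp [avec, esite, Pi.single_apply, Finset.sum_ite_eq] <;> split_ifs <;> simp

theorem dvec_inr (j : J) (y : E) : dvec (E := E) j (Sum.inr y) = 0 := by
  simp [dvec, esite]

theorem dvec_inl (j k : J) (i : Fin 2) :
    dvec (E := E) j (Sum.inl (k, i)) = if j = k then (if i = 0 then 1 else -1) else 0 := by
  fin_cases i <;> simp [dvec, esite, eq_comm]
  split_ifs <;> simp

theorem inner_bvec (C : J → Finset E) (ν : ℝ) (j : J) (v : EuclideanSpace ℂ (FBLat J E)) :
    ⟪bvec C ν j, v⟫_ℂ =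
      v (Sum.inl (j, 0)) + v (Sum.inl (j, 1)) + (ν : ℂ) * ∑ x ∈ C j, v (Sum.inr x) := by
  simp [bvec, esite, inner_add_left, inner_smul_left, sum_inner, EuclideanSpace.inner_single_left]

theorem comb_inr (C : J → Finset E) (ν : ℝ) (α : E → ℂ) (β : J → ℂ) (y : E) :
    (∑ x, α x • avec C ν x + ∑ j, β j • dvec (E := E) j) (Sum.inr y) = α y := by
  simp [avec_inr, dvec_inr]

theorem comb_inl (C : J → Finset E) (ν : ℝ) (α : E → ℂ) (β : J → ℂ) (k : J) (i : Fin 2) :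
    (∑ x, α x • avec C ν x + ∑ j, β j • dvec (E := E) j) (Sum.inl (k, i)) =
      -((ν : ℂ) / 2) * ∑ x ∈ C k, α x + (if i = 0 then β k else -β k) := by
  simp only [PiLp.add_apply, WithLp.ofLp_sum, Finset.sum_apply, PiLp.smul_apply, smul_eq_mul,
    avec_inl, dvec_inl, mul_ite, mul_zero, mul_one, mul_neg, Finset.sum_ite_mem,
    Finset.univ_inter, Finset.sum_ite_eq', Finset.mem_univ, if_true, Finset.mul_sum]
  congr 1
  exact Finset.sum_congr rfl fun x _ => by ring

theorem ham_zero_apply (C : J → Finset E) (ν t : ℝ) (v : EuclideanSpace ℂ (FBLat J E)) :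
    ham C ν t 0 v = (t : ℂ) • ∑ j, ⟪bvec C ν j, v⟫_ℂ • bvec C ν j := by
  simp [ham]

theorem inner_ham_zero (C : J → Finset E) (ν t : ℝ) (v : EuclideanSpace ℂ (FBLat J E)) :
    ⟪v, ham C ν t 0 v⟫_ℂ = ((t * ∑ j, ‖⟪bvec C ν j, v⟫_ℂ‖ ^ 2 : ℝ) : ℂ) := by
  rw [ham_zero_apply, inner_smul_right, inner_sum]
  push_cast
  congr 1
  refine Finset.sum_congr rfl fun j _ => ?_
  rw [inner_smul_right, ← inner_conj_symm v, Complex.mul_conj, Complex.normSq_eq_norm_sq]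
  push_cast
  rfl

/-- For `s' = 0` and `t > 0` the kernel is the orthogonal complement of the `b_j`, because the
quadratic form of `h` is a positive multiple of `∑ⱼ |⟪b_j, v⟫|²`. -/
theorem mem_ker_ham_iff (C : J → Finset E) (ν t : ℝ) (ht : 0 < t)
    (v : EuclideanSpace ℂ (FBLat J E)) :
    v ∈ LinearMap.ker (ham C ν t 0) ↔ ∀ j, ⟪bvec C ν j, v⟫_ℂ = 0 := by
  rw [LinearMap.mem_ker]
  constructor
  · intro h j
    have h1 := inner_ham_zero C ν t v
    rw [h, inner_zero_right, eq_comm, Complex.ofReal_eq_zero] at h1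
    have h2 := (mul_eq_zero.mp h1).resolve_left ht.ne'
    rw [Finset.sum_eq_zero_iff_of_nonneg fun _ _ => by positivity] at h2
    simpa using h2 j (Finset.mem_univ j)
  · intro h
    simp [ham_zero_apply, h]

theorem linearIndependent_avec_dvec (C : J → Finset E) (ν : ℝ) :
    LinearIndependent ℂ
      (Sum.elim (avec C ν) (dvec (E := E)) : E ⊕ J → EuclideanSpace ℂ (FBLat J E)) := by
  rw [Fintype.linearIndependent_iff]
  intro g hg
  rw [Fintype.sum_sum_type] at hg
  simp only [Sum.elim_inl, Sum.elim_inr] at hg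
  have hα : ∀ x, g (Sum.inl x) = 0 := fun x => by
    rw [← comb_inr C ν (fun x => g (Sum.inl x)) (fun j => g (Sum.inr j)) x, hg]
    rfl
  rintro (x | j)
  · exact hα x
  · have h := comb_inl C ν (fun x => g (Sum.inl x)) (fun j => g (Sum.inr j)) j 0
    rw [hg] at h
    simpa [hα] using h.symm

theorem ker_ham_eq_span (C : J → Finset E) (ν t : ℝ) (ht : 0 < t) :
    LinearMap.ker (ham C ν t 0) =
      Submodule.span ℂ
        (Set.range (Sum.elim (avec C ν) (dvec (E := E)) :
          E ⊕ J → EuclideanSpace ℂ (FBLat J E))) := by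
  apply le_antisymm
  · intro v hv
    rw [mem_ker_ham_iff C ν t ht] at hv
    -- The equation `⟪b_k, v⟫ = 0` is what makes the coordinates at `u_k` and `v_k` agree.
    have key : v = ∑ x, v (Sum.inr x) • avec C ν x +
        ∑ j, ((v (Sum.inl (j, 0)) - v (Sum.inl (j, 1))) / 2) • dvec (E := E) j := by
      ext r
      rcases r with ⟨k, i⟩ | y
      · have hk := hv k
        rw [inner_bvec] at hk
        rw [comb_inl C ν (fun x => v (Sum.inr x))
          (fun j => (v (Sum.inl (j, 0)) - v (Sum.inl (j, 1))) / 2) k i]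
        fin_cases i
        · simp only [Fin.zero_eta, if_true]
          linear_combination hk / 2
        · simp only [Fin.mk_one, one_ne_zero, if_false]
          linear_combination hk / 2
      · exact (comb_inr C ν (fun x => v (Sum.inr x))
          (fun j => (v (Sum.inl (j, 0)) - v (Sum.inl (j, 1))) / 2) y).symm
    rw [key]
    exact add_mem
      (sum_mem fun x _ => Submodule.smul_mem _ _ (Submodule.subset_span ⟨Sum.inl x, rfl⟩))
      (sum_mem fun j _ => Submodule.smul_mem _ _ (Submodule.subset_span ⟨Sum.inr j, rfl⟩))
  · rw [Submodule.span_le]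
    rintro _ ⟨x | j, rfl⟩
    · refine (mem_ker_ham_iff C ν t ht _).mpr fun j => ?_
      rw [inner_bvec]
      simp only [Sum.elim_inl, avec_inl, avec_inr, Finset.sum_ite_eq]
      split_ifs <;> ring
    · refine (mem_ker_ham_iff C ν t ht _).mpr fun k => ?_
      rw [inner_bvec]
      simp only [Sum.elim_inr, dvec_inl, dvec_inr]
      split_ifs <;> simp_all

theorem ham_kernel_eq_span_avec_dvec
    (n m : ℕ) (hn : 0 < n) (hm : 0 < m) (C : J → Finset E) (ν : ℝ) (hν : 0 < ν)
    (hCn : ∀ j : J, (C j).card = n)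
    (hCm : ∀ x : E, (Finset.univ.filter (fun j => x ∈ C j)).card = m)
    (t : ℝ) (ht : 0 < t)
    : LinearMap.ker (ham C ν t 0) =
      Submodule.span ℂ
        (Set.range (Sum.elim (avec C ν) (dvec (E := E)) : E ⊕ J → EuclideanSpace ℂ (FBLat J E))) ∧
    Module.finrank ℂ (LinearMap.ker (ham C ν t 0)) = Fintype.card E + Fintype.card J := by
  have hker := ker_ham_eq_span C ν t ht
  refine ⟨hker, ?_⟩
  rw [hker, finrank_span_eq_card (linearIndependent_avec_dvec C ν), Fintype.card_sum]
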